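/- Let 0 ≤ ρ ≪ σ be positive semidefinite operators (support of ρ contained in support of σ), p ≥ 0, and α > 1 with β = α − 1. Then p^β · tr([ρ − pσ]_+) ≤ p^β · tr(ρ · Π) ≤ tr((σ^{−β/(2α)} ρ σ^{−β/(2α)})^α), where Π is the projector onto the support of the positive part of ρ − pσ. -/

import Mathlib

open scoped Matrix BigOperators Classical ComplexOrder

noncomputable section

/-- Real part of the trace of a complex matrix. -/
def rtr {d : ℕ} (M : Matrix (Fin d) (Fin d) ℂ) : ℝ := (Matrix.trace M).re

/-- Functional calculus applied to a matrix (junk value `0` if the matrix is not Hermitian). -/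
def mfun {d : ℕ} (f : ℝ → ℝ) (A : Matrix (Fin d) (Fin d) ℂ) : Matrix (Fin d) (Fin d) ℂ :=
  if h : A.IsHermitian then h.cfc f else 0

/-- Positive part `[A]₊` of a Hermitian matrix. -/
def posPartM {d : ℕ} (A : Matrix (Fin d) (Fin d) ℂ) : Matrix (Fin d) (Fin d) ℂ :=
  mfun (fun x => max x 0) A

/-- Projector onto the support of the positive part of a Hermitian matrix. -/
def posSuppProj {d : ℕ} (A : Matrix (Fin d) (Fin d) ℂ) : Matrix (Fin d) (Fin d) ℂ :=
  mfun (fun x => if 0 < x then 1 else 0) A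

/-- Operator absolute value of a Hermitian matrix. -/
def absM {d : ℕ} (A : Matrix (Fin d) (Fin d) ℂ) : Matrix (Fin d) (Fin d) ℂ :=
  mfun (fun x => |x|) A

/-- Moore–Penrose (relative) power of a Hermitian matrix: `x ↦ x ^ p` on the support,
`0` on the kernel. -/
def mpow {d : ℕ} (A : Matrix (Fin d) (Fin d) ℂ) (p : ℝ) : Matrix (Fin d) (Fin d) ℂ :=
  mfun (fun x => if x = 0 then 0 else x ^ p) A

/-- Support containment: the kernel of `σ` is contained in the kernel of `ρ`,
i.e. `supp ρ ⊆ supp σ` for positive semidefinite matrices. -/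
def suppSubset {d : ℕ} (ρ σ : Matrix (Fin d) (Fin d) ℂ) : Prop :=
  ∀ v : Fin d → ℂ, σ.mulVec v = 0 → ρ.mulVec v = 0

/-- Sandwiched Rényi power `R_α(ρ|σ) = tr((σ^{-β/(2α)} ρ σ^{-β/(2α)})^α)`, `β = α - 1`. -/
def sandR {d : ℕ} (α : ℝ) (ρ σ : Matrix (Fin d) (Fin d) ℂ) : ℝ :=
  rtr (mpow (mpow σ (-(α - 1) / (2 * α)) * ρ * mpow σ (-(α - 1) / (2 * α))) α)

/-- Petz Rényi power `tr(ρ^α σ^{-β})`, `β = α - 1`. -/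
def petzR {d : ℕ} (α : ℝ) (ρ σ : Matrix (Fin d) (Fin d) ℂ) : ℝ :=
  rtr (mpow ρ α * mpow σ (-(α - 1)))


open Matrix

lemma mfun_eq {d : ℕ} (f : ℝ → ℝ) {A : Matrix (Fin d) (Fin d) ℂ} (h : A.IsHermitian) :
    mfun f A = Unitary.conjStarAlgAut ℂ _ h.eigenvectorUnitary
      (diagonal (fun i => ((f (h.eigenvalues i) : ℝ) : ℂ))) := by
  rw [mfun, dif_pos h]; rfl

lemma mfun_mul {d : ℕ} (f g : ℝ → ℝ) {A : Matrix (Fin d) (Fin d) ℂ} (h : A.IsHermitian) :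
    mfun f A * mfun g A = mfun (fun x => f x * g x) A := by
  rw [mfun_eq f h, mfun_eq g h, mfun_eq _ h, ← map_mul, diagonal_mul_diagonal]
  simp only [Complex.ofReal_mul]

lemma mfun_add {d : ℕ} (f g : ℝ → ℝ) {A : Matrix (Fin d) (Fin d) ℂ} (h : A.IsHermitian) :
    mfun f A + mfun g A = mfun (fun x => f x + g x) A := by
  rw [mfun_eq f h, mfun_eq g h, mfun_eq _ h, ← map_add, diagonal_add]
  simp only [Complex.ofReal_add]

lemma mfun_smul {d : ℕ} (c : ℝ) (f : ℝ → ℝ) {A : Matrix (Fin d) (Fin d) ℂ} (h : A.IsHermitian) :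
    (c : ℂ) • mfun f A = mfun (fun x => c * f x) A := by
  rw [mfun_eq f h, mfun_eq _ h, ← map_smul, ← diagonal_smul]
  simp only [Complex.ofReal_mul]
  rfl

lemma mfun_one {d : ℕ} {A : Matrix (Fin d) (Fin d) ℂ} (h : A.IsHermitian) :
    mfun (fun _ => 1) A = 1 := by
  rw [mfun_eq _ h]
  simp only [Complex.ofReal_one, diagonal_one, map_one]

lemma mfun_id {d : ℕ} {A : Matrix (Fin d) (Fin d) ℂ} (h : A.IsHermitian) :
    mfun (fun x => x) A = A := by
  rw [mfun_eq _ h]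
  exact h.spectral_theorem.symm

lemma mfun_congr {d : ℕ} {f g : ℝ → ℝ} {A : Matrix (Fin d) (Fin d) ℂ} (h : A.PosSemidef)
    (hfg : ∀ x, 0 ≤ x → f x = g x) : mfun f A = mfun g A := by
  rw [mfun_eq f h.1, mfun_eq g h.1]
  congr 2
  funext i
  rw [hfg _ (h.eigenvalues_nonneg i)]

lemma mfun_psd_aux {d : ℕ} {f : ℝ → ℝ} {A : Matrix (Fin d) (Fin d) ℂ} (h : A.IsHermitian)
    (hf : ∀ i, 0 ≤ f (h.eigenvalues i)) : (mfun f A).PosSemidef := by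
  rw [mfun_eq f h, Unitary.conjStarAlgAut_apply]
  have : (diagonal (fun i => ((f (h.eigenvalues i) : ℝ) : ℂ))).PosSemidef := by
    rw [posSemidef_diagonal_iff]
    intro i
    exact_mod_cast hf i
  exact this.mul_mul_conjTranspose_same _

lemma mfun_psd {d : ℕ} {f : ℝ → ℝ} {A : Matrix (Fin d) (Fin d) ℂ} (h : A.PosSemidef)
    (hf : ∀ x, 0 ≤ x → 0 ≤ f x) : (mfun f A).PosSemidef :=
  mfun_psd_aux h.1 fun i => hf _ (h.eigenvalues_nonneg i)

lemma mfun_herm {d : ℕ} (f : ℝ → ℝ) {A : Matrix (Fin d) (Fin d) ℂ} (h : A.IsHermitian) :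
    (mfun f A)ᴴ = mfun f A := by
  have : mfun f A = mfun (fun x => max (f x) 0) A + ((-1 : ℝ) : ℂ) • mfun (fun x => max (-f x) 0) A := by
    rw [mfun_smul _ _ h, mfun_add _ _ h]
    congr 1
    funext x
    rcases le_total (f x) 0 with h | h
    · rw [max_eq_right h, max_eq_left (by linarith)]; ring
    · rw [max_eq_left h, max_eq_right (by linarith)]; ring
  have h1 := (mfun_psd_aux (f := fun x => max (f x) 0) h (fun _ => le_max_right _ _)).1
  have h2 := (mfun_psd_aux (f := fun x => max (-f x) 0) h (fun _ => le_max_right _ _)).1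
  rw [this, conjTranspose_add, conjTranspose_smul, h1.eq, h2.eq]
  simp

lemma op_young {d : ℕ} {f g : ℝ → ℝ} {A N : Matrix (Fin d) (Fin d) ℂ} (h : A.PosSemidef)
    {s a b : ℝ} (hb : 0 ≤ b) (hfg : ∀ x, 0 ≤ x → s * f x ≤ a * g x + b) (j : Fin d)
    (hN : ((Nᴴ * N) j j).re ≤ 1) :
    s * ((Nᴴ * mfun f A * N) j j).re ≤ a * ((Nᴴ * mfun g A * N) j j).re + b := by
  have h1 : (mfun (fun x => a * g x + (b * 1 + (-s) * f x)) A).PosSemidef :=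
    mfun_psd h (fun x hx => by have := hfg x hx; linarith)
  rw [← mfun_add _ _ h.1, ← mfun_add _ _ h.1, ← mfun_smul _ _ h.1, ← mfun_smul _ _ h.1,
    ← mfun_smul _ _ h.1, mfun_one h.1] at h1
  have h2 := (h1.conjTranspose_mul_mul_same N).diag_nonneg (i := j)
  have h3 := (Complex.le_def.1 h2).1
  simp only [Matrix.mul_add, Matrix.add_mul, Matrix.mul_smul, Matrix.smul_mul, Matrix.mul_one,
    Matrix.add_apply, Matrix.smul_apply, Complex.add_re, smul_eq_mul, Complex.re_ofReal_mul,
    Complex.zero_re] at h3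
  nlinarith

lemma rtr_psd {d : ℕ} {A : Matrix (Fin d) (Fin d) ℂ} (h : A.PosSemidef) : 0 ≤ rtr A :=
  (Complex.le_def.1 h.trace_nonneg).1

lemma rtr_sum {d : ℕ} (A : Matrix (Fin d) (Fin d) ℂ) : rtr A = ∑ j, (A j j).re := by
  simp [rtr, Matrix.trace]

lemma bessel {d : ℕ} {B N : Matrix (Fin d) (Fin d) ℂ} (h : B.PosSemidef)
    (hN : N * Nᴴ * N = N) : rtr (Nᴴ * B * N) ≤ rtr B := by
  set P := 1 - N * Nᴴ with hP
  have hPh : Pᴴ = P := by simp [hP]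
  have hPP : P * P = P := by
    rw [hP]
    simp only [Matrix.mul_sub, Matrix.sub_mul, Matrix.one_mul, Matrix.mul_one]
    rw [← Matrix.mul_assoc, hN]; simp
  have h1 := rtr_psd (h.conjTranspose_mul_mul_same P)
  have h2 : rtr (Pᴴ * B * P) = rtr B - rtr (Nᴴ * B * N) := by
    unfold rtr
    rw [hPh, Matrix.trace_mul_cycle, hPP, hP, Matrix.sub_mul, trace_sub, Matrix.one_mul,
      Complex.sub_re, Matrix.mul_assoc Nᴴ, Matrix.trace_mul_comm Nᴴ, Matrix.trace_mul_comm (N * Nᴴ),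
      Matrix.mul_assoc B]
  linarith

/-- The core trace inequality. -/
lemma core {d : ℕ} (X σ Q : Matrix (Fin d) (Fin d) ℂ) (hX : X.PosSemidef) (hσ : σ.PosSemidef)
    (hQh : Qᴴ = Q) (hQQ : Q * Q = Q) (α : ℝ) (hα : 1 < α) (c : ℝ) (hc : 0 ≤ c) :
    c * rtr (Q * (mpow σ ((α - 1) / (2 * α)) * X * mpow σ ((α - 1) / (2 * α))) * Q) ≤
      rtr (mpow X α) / α + c ^ (α / (α - 1)) * rtr (Q * σ * Q) / (α / (α - 1)) := by
  have hα0 : 0 < α := by linarith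
  have hβ : 0 < α - 1 := by linarith
  have hconj : α.HolderConjugate (α / (α - 1)) := Real.HolderConjugate.conjExponent hα
  set q := α / (α - 1) with hq
  have hq0 : 0 < q := by positivity
  set S := mpow σ ((α - 1) / (2 * α)) with hS
  have hSh : Sᴴ = S := mfun_herm _ hσ.1
  have hSS : S * S = mfun (fun x => x ^ (1 / q)) σ := by
    rw [hS, mpow, mfun_mul _ _ hσ.1]
    refine mfun_congr hσ fun x hx => ?_
    have e : 1 / q = (α - 1) / (2 * α) + (α - 1) / (2 * α) := by rw [hq]; field_simp; ring
    rcases hx.eq_or_lt with rfl | hx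
    · rw [Real.zero_rpow (one_div_pos.2 hq0).ne', if_pos rfl, zero_mul]
    · rw [if_neg hx.ne', e, Real.rpow_add hx]
  have hZ : (Q * (S * S) * Q).PosSemidef := by
    have := posSemidef_conjTranspose_mul_self (S * Q)
    rw [conjTranspose_mul, hSh, hQh] at this
    simpa only [Matrix.mul_assoc] using this
  set F : Matrix (Fin d) (Fin d) ℂ := (hZ.1.eigenvectorUnitary : Matrix (Fin d) (Fin d) ℂ) with hF
  set z := hZ.1.eigenvalues with hz
  have hz0 : ∀ j, 0 ≤ z j := hZ.eigenvalues_nonneg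
  have hFF : Fᴴ * F = 1 := Unitary.coe_star_mul_self hZ.1.eigenvectorUnitary
  have hFF' : F * Fᴴ = 1 := Unitary.coe_mul_star_self hZ.1.eigenvectorUnitary
  have hdiag : Fᴴ * (Q * (S * S) * Q) * F = diagonal (fun i => (z i : ℂ)) := by
    have := hZ.1.spectral_theorem
    rw [Unitary.conjStarAlgAut_apply] at this
    have h2 : Q * (S * S) * Q = F * diagonal (fun i => (z i : ℂ)) * Fᴴ := this
    rw [h2]
    calc Fᴴ * (F * diagonal (fun i => (z i : ℂ)) * Fᴴ) * F
        = (Fᴴ * F) * diagonal (fun i => (z i : ℂ)) * (Fᴴ * F) := by simp only [Matrix.mul_assoc]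
      _ = _ := by rw [hFF]; simp
  have htrF : ∀ M : Matrix (Fin d) (Fin d) ℂ, rtr (Fᴴ * M * F) = rtr M := by
    intro M
    unfold rtr
    rw [Matrix.trace_mul_cycle, hFF', Matrix.one_mul]
  set W := S * Q * F with hW
  have hWh : Wᴴ = Fᴴ * Q * S := by
    rw [hW]; simp only [conjTranspose_mul, hSh, hQh, Matrix.mul_assoc]
  have hWW : Wᴴ * W = diagonal (fun i => (z i : ℂ)) := by
    rw [← hdiag, hWh, hW]; simp only [Matrix.mul_assoc]
  let r : Fin d → ℝ := fun j => (Real.sqrt (z j))⁻¹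
  set D : Matrix (Fin d) (Fin d) ℂ := diagonal (fun j => (r j : ℂ)) with hD
  have hDh : Dᴴ = D := by
    rw [hD, diagonal_conjTranspose]; congr 1; funext j; simp
  set N := W * D with hN
  have hNh : Nᴴ = D * Wᴴ := by rw [hN, conjTranspose_mul, hDh]
  have hrz : ∀ j, r j * z j * r j * r j = r j := by
    intro j
    have h1 := Real.mul_self_sqrt (hz0 j)
    by_cases h0 : Real.sqrt (z j) = 0
    · simp [r, h0]
    · simp only [r]
      conv_lhs => rw [← h1]
      field_simp
      simp [h1, pow_two] 
  have hNN : Nᴴ * N = diagonal (fun j => ((r j * z j * r j : ℝ) : ℂ)) := by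
    rw [hNh, hN]
    calc D * Wᴴ * (W * D) = D * (Wᴴ * W) * D := by simp only [Matrix.mul_assoc]
      _ = _ := by
        rw [hWW, hD, diagonal_mul_diagonal, diagonal_mul_diagonal]
        simp only [Complex.ofReal_mul]
  have hNNN : N * Nᴴ * N = N := by
    rw [Matrix.mul_assoc, hNN, hN, Matrix.mul_assoc, hD, diagonal_mul_diagonal]
    congr 2
    funext j
    have := hrz j
    rw [← Complex.ofReal_mul]
    congr 1
    linarith
  have hNj : ∀ j, ((Nᴴ * N) j j).re ≤ 1 := by
    intro j
    rw [hNN, diagonal_apply_eq, Complex.ofReal_re]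
    by_cases h0 : r j = 0
    · rw [h0]; simp
    · have := hrz j
      exact (mul_right_cancel₀ h0 (this.trans (one_mul _).symm)).le
  -- the diagonal entries of `Wᴴ X W`
  have hWX : ∀ j, ((Wᴴ * X * W) j j).re = z j * ((Nᴴ * X * N) j j).re := by
    intro j
    have e1 : Nᴴ * X * N = D * (Wᴴ * X * W) * D := by
      rw [hNh, hN]; simp only [Matrix.mul_assoc]
    have e2 : ((Nᴴ * X * N) j j).re = r j * r j * ((Wᴴ * X * W) j j).re := by
      rw [e1, hD, mul_diagonal, diagonal_mul, mul_comm, ← mul_assoc, ← Complex.ofReal_mul,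
        Complex.re_ofReal_mul]
    rw [e2]
    rcases (hz0 j).eq_or_lt with h0 | h0
    · have h1 : (Wᴴ * W) j j = 0 := by rw [hWW, diagonal_apply_eq, ← h0]; simp
      have h2 : ∀ i, W i j = 0 := by
        rw [Matrix.mul_apply] at h1
        have h3 : ∑ i, Complex.normSq (W i j) = 0 := by
          have := congrArg Complex.re h1
          simp only [Complex.re_sum, conjTranspose_apply, Complex.zero_re] at this
          rw [← this]
          refine Finset.sum_congr rfl fun i _ => ?_
          rw [Complex.normSq_apply]; simp
        intro i
        have := (Finset.sum_eq_zero_iff_of_nonneg (fun i _ => Complex.normSq_nonneg (W i j))).1 h3 i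
          (Finset.mem_univ _)
        exact Complex.normSq_eq_zero.1 this
      have h4 : (Wᴴ * X * W) j j = 0 := by
        rw [Matrix.mul_apply]
        exact Finset.sum_eq_zero fun i _ => by rw [h2]; simp
      rw [h4]; simp
    · have h1 : z j * (r j * r j) = 1 := by
        have := Real.mul_self_sqrt (hz0 j)
        simp only [r]
        rw [← mul_inv, this, mul_inv_cancel₀ h0.ne']
      exact (by intro t; rw [← mul_assoc, h1, one_mul] : ∀ t : ℝ, t = z j * (r j * r j * t)) _
  -- Young on X
  have hY1 : ∀ j, c * ((Wᴴ * X * W) j j).re ≤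
      (1 / α) * ((Nᴴ * mpow X α * N) j j).re + (c * z j) ^ q / q := by
    intro j
    have hs : 0 ≤ c * z j := mul_nonneg hc (hz0 j)
    have := op_young (f := fun x => x) (g := fun x => if x = 0 then 0 else x ^ α) (N := N) hX
      (s := c * z j) (a := 1 / α) (b := (c * z j) ^ q / q) (by positivity) (fun x hx => by
        have h1 := Real.young_inequality_of_nonneg hx hs hconj
        have h2 : (if x = 0 then 0 else x ^ α) = x ^ α := by
          split_ifs with h
          · rw [h, Real.zero_rpow hα0.ne']
          · rfl
        rw [h2]
        calc c * z j * x = x * (c * z j) := by ring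
          _ ≤ _ := h1
          _ = _ := by ring) j (hNj j)
    rw [mfun_id hX.1] at this
    rw [hWX, ← mul_assoc]
    exact this
  -- Young on σ
  set G := Q * F with hG
  have hGh : Gᴴ = Fᴴ * Q := by rw [hG, conjTranspose_mul, hQh]
  have hGj : ∀ j, ((Gᴴ * G) j j).re ≤ 1 := by
    intro j
    have h1 := posSemidef_conjTranspose_mul_self ((1 - Q) * F)
    have h2 : ((1 - Q) * F)ᴴ * ((1 - Q) * F) = 1 - Gᴴ * G := by
      rw [hGh, hG, conjTranspose_mul, conjTranspose_sub, hQh, conjTranspose_one]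
      calc Fᴴ * (1 - Q) * ((1 - Q) * F) = Fᴴ * ((1 - Q) * (1 - Q)) * F := by
            simp only [Matrix.mul_assoc]
        _ = Fᴴ * (1 - Q * Q) * F := by
            congr 2
            simp only [Matrix.mul_sub, Matrix.sub_mul, Matrix.one_mul, Matrix.mul_one, hQQ]
            simp
        _ = Fᴴ * F - Fᴴ * Q * (Q * F) := by
            simp only [Matrix.mul_sub, Matrix.sub_mul, Matrix.mul_one, Matrix.mul_assoc]
        _ = _ := by rw [hFF]
    rw [h2] at h1
    have h3 := (Complex.le_def.1 (h1.diag_nonneg (i := j))).1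
    simp at h3
    linarith
  have hY2 : ∀ j, z j ^ q ≤ ((Gᴴ * σ * G) j j).re := by
    intro j
    have hs : 0 ≤ z j ^ (1 / (α - 1)) := Real.rpow_nonneg (hz0 j) _
    have e1 : (z j ^ (1 / (α - 1))) ^ α = z j ^ q := by
      rw [← Real.rpow_mul (hz0 j)]; congr 1; rw [hq]; ring
    have e2 : z j ^ (1 / (α - 1)) * z j = z j ^ q := by
      rw [← Real.rpow_add_one' (hz0 j) (by positivity)]; congr 1; rw [hq]; field_simp; ring
    have := op_young (f := fun x => x ^ (1 / q)) (g := fun x => x) (N := G) hσ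
      (s := z j ^ (1 / (α - 1))) (a := 1 / q) (b := z j ^ q / α)
      (div_nonneg (Real.rpow_nonneg (hz0 j) _) hα0.le) (fun x hx => by
        have h1 := Real.young_inequality_of_nonneg hs (Real.rpow_nonneg hx (1 / q)) hconj
        rw [e1, ← Real.rpow_mul hx, one_div_mul_cancel hq0.ne', Real.rpow_one] at h1
        calc _ ≤ _ := h1
          _ = _ := by ring) j (hGj j)
    rw [mfun_id hσ.1, ← hSS] at this
    have e3 : Gᴴ * (S * S) * G = diagonal (fun i => (z i : ℂ)) := by
      rw [← hdiag, hGh, hG]; simp only [Matrix.mul_assoc]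
    rw [e3, diagonal_apply_eq, Complex.ofReal_re, e2] at this
    have hsum : 1 / α + 1 / q = 1 := by
      have := hconj.inv_add_inv_eq_one
      simpa [one_div] using this
    have h5 : (1 / q) * z j ^ q ≤ (1 / q) * ((Gᴴ * σ * G) j j).re := by
      have : 1 / q = 1 - 1 / α := by linarith
      calc (1 / q) * z j ^ q = z j ^ q - z j ^ q / α := by rw [this]; ring
        _ ≤ _ := by linarith
    exact le_of_mul_le_mul_left h5 (by positivity)
  have hT : rtr (Q * (S * X * S) * Q) = ∑ j, ((Wᴴ * X * W) j j).re := by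
    rw [← rtr_sum, ← htrF, hWh, hW]; simp only [Matrix.mul_assoc]
  have hσT : rtr (Q * σ * Q) = ∑ j, ((Gᴴ * σ * G) j j).re := by
    rw [← rtr_sum, ← htrF, hGh, hG]; simp only [Matrix.mul_assoc]
  have hmX : (mpow X α).PosSemidef := mfun_psd hX fun x hx => by
    split_ifs
    · exact le_rfl
    · positivity
  have hB := bessel hmX hNNN
  calc c * rtr (Q * (S * X * S) * Q) = ∑ j, c * ((Wᴴ * X * W) j j).re := by
        rw [hT, Finset.mul_sum]
    _ ≤ ∑ j, ((1 / α) * ((Nᴴ * mpow X α * N) j j).re + (c ^ q / q) * ((Gᴴ * σ * G) j j).re) := by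
        refine Finset.sum_le_sum fun j _ => (hY1 j).trans ?_
        rw [Real.mul_rpow hc (hz0 j)]
        have h6 : 0 ≤ c ^ q / q := by positivity
        have := mul_le_mul_of_nonneg_left (hY2 j) h6
        have e : c ^ q * z j ^ q / q = c ^ q / q * z j ^ q := by ring
        linarith
    _ = (1 / α) * rtr (Nᴴ * mpow X α * N) + (c ^ q / q) * rtr (Q * σ * Q) := by
        rw [Finset.sum_add_distrib, ← Finset.mul_sum, ← Finset.mul_sum, hσT, rtr_sum (Nᴴ * _ * N)]
    _ ≤ (1 / α) * rtr (mpow X α) + (c ^ q / q) * rtr (Q * σ * Q) := by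
        have : 0 ≤ 1 / α := by positivity
        have := mul_le_mul_of_nonneg_left hB this
        linarith
    _ = _ := by ring

lemma recover {d : ℕ} (ρ σ : Matrix (Fin d) (Fin d) ℂ)
    (hρ : ρ.PosSemidef) (hσ : σ.PosSemidef) (hsupp : suppSubset ρ σ) (g : ℝ) :
    mpow σ g * (mpow σ (-g) * ρ * mpow σ (-g)) * mpow σ g = ρ := by
  set P := mfun (fun x => if x = 0 then 0 else 1) σ with hP
  have h1 : mpow σ g * mpow σ (-g) = P := by
    rw [mpow, mpow, mfun_mul _ _ hσ.1]
    refine mfun_congr hσ fun x hx => ?_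
    split_ifs with h
    · simp
    · rw [← Real.rpow_add (lt_of_le_of_ne hx (Ne.symm h))]; simp
  have h2 : mpow σ (-g) * mpow σ g = P := by
    rw [mpow, mpow, mfun_mul _ _ hσ.1]
    refine mfun_congr hσ fun x hx => ?_
    split_ifs with h
    · simp
    · rw [← Real.rpow_add (lt_of_le_of_ne hx (Ne.symm h))]; simp
  have h3 : σ * P = σ := by
    conv_lhs => rw [← mfun_id hσ.1]
    conv_rhs => rw [← mfun_id hσ.1]
    rw [hP]
    rw [mfun_mul _ _ hσ.1]
    refine mfun_congr hσ fun x hx => ?_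
    split_ifs with h
    · simp [h]
    · simp
  have h4 : ρ * P = ρ := by
    have : ρ * (1 - P) = 0 := by
      ext i j
      have a1 : σ.mulVec ((1 - P).col j) = 0 := by
        have : σ * (1 - P) = 0 := by rw [Matrix.mul_sub, h3]; simp
        funext i
        exact congrFun (congrFun this i) j
      exact congrFun (hsupp _ a1) i
    rw [Matrix.mul_sub, Matrix.mul_one, sub_eq_zero] at this
    exact this.symm
  have h5 : P * ρ = ρ := by
    have := congrArg conjTranspose h4
    rwa [conjTranspose_mul, hP, mfun_herm _ hσ.1, hρ.1.eq] at this
  calc _ = (mpow σ g * mpow σ (-g)) * ρ * (mpow σ (-g) * mpow σ g) := by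
        simp only [Matrix.mul_assoc]
    _ = ρ := by rw [h1, h2, h5, h4]

/-- For `0 ≤ ρ ≪ σ` and `p ≥ 0`:
`p^β tr([ρ - pσ]₊) ≤ p^β tr(ρ Π) ≤ R_α(ρ|σ)` where `Π = {ρ - pσ > 0}` and `β = α - 1`. -/
theorem stmt8 {d : ℕ} (ρ σ : Matrix (Fin d) (Fin d) ℂ)
    (hρ : ρ.PosSemidef) (hσ : σ.PosSemidef) (hsupp : suppSubset ρ σ)
    (p : ℝ) (hp : 0 ≤ p) (α : ℝ) (hα : 1 < α) :
    p ^ (α - 1) * rtr (posPartM (ρ - (p : ℂ) • σ)) ≤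
        p ^ (α - 1) * rtr (ρ * posSuppProj (ρ - (p : ℂ) • σ)) ∧
      p ^ (α - 1) * rtr (ρ * posSuppProj (ρ - (p : ℂ) • σ)) ≤ sandR α ρ σ := by
  have hα0 : 0 < α := by linarith
  have hβ : 0 < α - 1 := by linarith
  have hA : (ρ - (p : ℂ) • σ).IsHermitian := by
    rw [IsHermitian, conjTranspose_sub, conjTranspose_smul, hρ.1.eq, hσ.1.eq]; simp
  set A := ρ - (p : ℂ) • σ with hAdef
  set Q := posSuppProj A with hQ
  have hQh : Qᴴ = Q := mfun_herm _ hA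
  have hQQ : Q * Q = Q := by
    rw [hQ, posSuppProj, mfun_mul _ _ hA]; congr 1; funext x; split_ifs <;> simp
  have hAQ : A * Q = posPartM A := by
    have : mfun (fun x => x) A * Q = posPartM A := by
      rw [hQ, posSuppProj, posPartM, mfun_mul _ _ hA]
      congr 1; funext x
      split_ifs with h
      · rw [max_eq_left h.le, mul_one]
      · rw [max_eq_right (not_lt.1 h), mul_zero]
    rwa [mfun_id hA] at this
  have hpos : 0 ≤ rtr (posPartM A) := rtr_psd (mfun_psd_aux hA fun _ => le_max_right _ _)
  have hcyc : ∀ M : Matrix (Fin d) (Fin d) ℂ, rtr (Q * M * Q) = rtr (M * Q) := by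
    intro M
    unfold rtr
    rw [Matrix.trace_mul_cycle, hQQ, Matrix.trace_mul_comm]
  have hσQ : 0 ≤ rtr (σ * Q) := by
    rw [← hcyc]
    have := rtr_psd (hσ.conjTranspose_mul_mul_same Q)
    rwa [hQh] at this
  have hsplit : rtr (posPartM A) = rtr (ρ * Q) - p * rtr (σ * Q) := by
    rw [← hAQ, hAdef, Matrix.sub_mul, Matrix.smul_mul]
    simp [rtr]
  have hpb : 0 ≤ p ^ (α - 1) := Real.rpow_nonneg hp _
  refine ⟨mul_le_mul_of_nonneg_left (by nlinarith) hpb, ?_⟩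
  set R := mpow σ (-(α - 1) / (2 * α)) with hR
  have hRh : Rᴴ = R := mfun_herm _ hσ.1
  have hX : (R * ρ * R).PosSemidef := by
    have := hρ.conjTranspose_mul_mul_same R
    rwa [hRh] at this
  have hc := core (R * ρ * R) σ Q hX hσ hQh hQQ α hα (p ^ (α - 1)) hpb
  have hrec := recover ρ σ hρ hσ hsupp ((α - 1) / (2 * α))
  rw [← neg_div, ← hR] at hrec
  rw [hrec, hcyc, hcyc] at hc
  have e1 : (p ^ (α - 1)) ^ (α / (α - 1)) = p ^ (α - 1) * p := by
    rw [← Real.rpow_mul hp, ← Real.rpow_add_one' hp (by linarith)]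
    congr 1; field_simp; ring
  rw [e1] at hc
  change _ ≤ rtr (mpow (R * ρ * R) α)
  set T := p ^ (α - 1) * rtr (ρ * Q) with hT
  set Y := rtr (mpow (R * ρ * R) α)
  have h7 : p ^ (α - 1) * p * rtr (σ * Q) ≤ T := by
    rw [hT, mul_assoc]; exact mul_le_mul_of_nonneg_left (by linarith) hpb
  have h8 : T ≤ Y / α + T / (α / (α - 1)) :=
    hc.trans (by gcongr)
  have h9 : T / (α / (α - 1)) = T - T / α := by field_simp
  have h10 : T / α ≤ Y / α := by linarith
  exact (div_le_div_iff_of_pos_right hα0).1 h10
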